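/- Lower bound on the first moment of the score at the oversmoothing threshold: let Φ̄(t) = ∫_t^∞ φ(u)du. With ζ_1 = ζ(α_1) as above and π_1 = (1/n)·#{i : |θ_{0,i}| ≥ ζ_1} for θ_0 ∈ ℓ0[s_n], a solution 0 < α ≤ α_1 of the equation Φ̄(ζ(α) − ζ_1) = 8·π_1^{−1}·α·m̃(α) exists. Let α_3 be the largest such solution and ζ_3 = ζ(α_3). Then, provided the constant c_0 in the condition s_n ≤ c_0·n is small enough, m_1(ζ_1, α_3) ≥ (1/4)·β(ζ_3)·Φ̄(ζ_3 − ζ_1). -/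

import Mathlib

/-!
Statement 11: lower bound on the first moment of the score at the
oversmoothing threshold, spike and Cauchy slab prior.
-/

open MeasureTheory Real Set

noncomputable section

/-- Standard normal density. -/
def phi (x : ℝ) : ℝ := Real.exp (-x ^ 2 / 2) / Real.sqrt (2 * Real.pi)

/-- Standard Cauchy density. -/
def cauchyDen (x : ℝ) : ℝ := (Real.pi * (1 + x ^ 2))⁻¹

/-- Convolution `g = φ * γ`. -/
def conv (γ : ℝ → ℝ) (x : ℝ) : ℝ := ∫ u, phi (x - u) * γ u

/-- `β(x) = g(x)/φ(x) - 1`. -/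
def betaFn (γ : ℝ → ℝ) (x : ℝ) : ℝ := conv γ x / phi x - 1

/-- `m₁(μ, α) = E_μ β(X, α)`, `X ~ N(μ,1)`, where `β(x,α) = β(x)/(1 + αβ(x))`. -/
def m1 (γ : ℝ → ℝ) (μ α : ℝ) : ℝ :=
  ∫ x, betaFn γ x / (1 + α * betaFn γ x) ∂(ProbabilityTheory.gaussianReal μ 1)

/-- `m̃(α) = -m₁(0, α)`. -/
def mtilde (γ : ℝ → ℝ) (α : ℝ) : ℝ := -m1 γ 0 α

/-- Upper tail of the standard normal, `Φ̄(t) = ∫_t^∞ φ`. -/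
def Phibar (t : ℝ) : ℝ := ∫ u in Set.Ioi t, phi u

/-- The class `ℓ₀[s]` of `s`-sparse vectors. -/
def ell0 (n s : ℕ) : Set (Fin n → ℝ) := {θ | Nat.card {i : Fin n // θ i ≠ 0} ≤ s}

lemma phi_pos (x : ℝ) : 0 < phi x := by unfold phi; positivity

lemma phi_le_one (x : ℝ) : phi x ≤ 1 := by
  unfold phi
  rw [div_le_one (by positivity)]
  calc Real.exp (-x ^ 2 / 2) ≤ 1 := Real.exp_le_one_iff.2 (by nlinarith [sq_nonneg x])
    _ ≤ _ := by
      rw [Real.one_le_sqrt]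
      nlinarith [Real.pi_gt_three]

lemma phi_continuous : Continuous phi := by
  unfold phi; fun_prop

lemma phi_anti {a b : ℝ} (ha : 0 ≤ a) (hab : a ≤ b) : phi b ≤ phi a := by
  unfold phi
  gcongr

lemma phi_abs (x : ℝ) : phi |x| = phi x := by simp [phi]

lemma phi_pdf (μ x : ℝ) : ProbabilityTheory.gaussianPDFReal μ 1 x = phi (x - μ) := by
  unfold ProbabilityTheory.gaussianPDFReal phi
  simp
  field_simp

lemma phi_integrable : Integrable phi := by
  have := ProbabilityTheory.integrable_gaussianPDFReal 0 1
  refine this.congr (ae_of_all _ fun x => ?_)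
  simp [phi_pdf]

lemma phi_integral : ∫ x, phi x = 1 := by
  have := ProbabilityTheory.integral_gaussianPDFReal_eq_one 0 (v := 1) one_ne_zero
  rw [← this]
  congr 1; ext x; simp [phi_pdf]

lemma cau_pos (x : ℝ) : 0 < cauchyDen x := by
  unfold cauchyDen
  have := Real.pi_pos
  positivity

lemma cau_anti {a b : ℝ} (ha : 0 ≤ a) (hab : a ≤ b) : cauchyDen b ≤ cauchyDen a := by
  unfold cauchyDen
  have := Real.pi_pos
  gcongr

lemma cau_continuous : Continuous cauchyDen := by
  unfold cauchyDen
  have := Real.pi_pos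
  refine Continuous.inv₀ (by fun_prop) (fun x => by positivity)

lemma cau_integrable : Integrable cauchyDen := by
  unfold cauchyDen
  simp_rw [mul_inv]
  exact integrable_inv_one_add_sq.const_mul _

lemma cau_integral : ∫ x, cauchyDen x = 1 := by
  unfold cauchyDen
  simp_rw [mul_inv]
  rw [integral_const_mul, integral_univ_inv_one_add_sq]
  exact inv_mul_cancel₀ Real.pi_pos.ne'

lemma conv_integrand (x : ℝ) : Integrable (fun u => phi (x - u) * cauchyDen u) := by
  refine cau_integrable.bdd_mul (c := 1) ?_ ?_
  · exact (phi_continuous.comp (by fun_prop)).aestronglyMeasurable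
  · exact ae_of_all _ fun u => by
      rw [Real.norm_of_nonneg (phi_pos _).le]; exact phi_le_one _

lemma conv_continuous : Continuous (conv cauchyDen) := by
  unfold conv
  refine continuous_of_dominated (bound := cauchyDen) ?_ ?_ cau_integrable ?_
  · exact fun x => (conv_integrand x).aestronglyMeasurable
  · intro x
    refine ae_of_all _ fun u => ?_
    rw [Real.norm_of_nonneg (mul_pos (phi_pos _) (cau_pos _)).le]
    exact mul_le_of_le_one_left (cau_pos _).le (phi_le_one _)
  · refine ae_of_all _ fun u => ?_
    exact (phi_continuous.comp (by fun_prop)).mul continuous_const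

lemma conv_nonneg (x : ℝ) : 0 ≤ conv cauchyDen x :=
  integral_nonneg fun u => (mul_pos (phi_pos _) (cau_pos _)).le

lemma conv_eq_convolution : conv cauchyDen =
    MeasureTheory.convolution cauchyDen phi (ContinuousLinearMap.mul ℝ ℝ) volume := by
  ext x
  simp only [conv, MeasureTheory.convolution, ContinuousLinearMap.mul_apply']
  congr 1; ext u; ring

lemma conv_integrable : Integrable (conv cauchyDen) := by
  rw [conv_eq_convolution]
  exact cau_integrable.integrable_convolution _ phi_integrable

lemma conv_integral : ∫ x, conv cauchyDen x = 1 := by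
  rw [conv_eq_convolution, MeasureTheory.integral_convolution _ cau_integrable phi_integrable,
    cau_integral, phi_integral]
  simp

lemma beta_continuous : Continuous (betaFn cauchyDen) := by
  unfold betaFn
  exact (conv_continuous.div phi_continuous fun x => (phi_pos x).ne').sub continuous_const

lemma beta_ge (x : ℝ) : -1 ≤ betaFn cauchyDen x := by
  unfold betaFn
  have := div_nonneg (conv_nonneg x) (phi_pos x).le
  linarith

lemma conv_sym (x : ℝ) : conv cauchyDen x = ∫ u, phi (x + u) * cauchyDen u := by
  unfold conv
  rw [← integral_neg_eq_self]
  congr 1; ext u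
  simp [cauchyDen]

lemma conv_integrand' (x : ℝ) : Integrable (fun u => phi (x + u) * cauchyDen u) := by
  have := (conv_integrand x).comp_neg
  refine this.congr (ae_of_all _ fun u => ?_)
  simp [cauchyDen]

lemma phi_cosh (x u : ℝ) : (phi (x - u) + phi (x + u)) / phi x =
    2 * Real.cosh (x * u) * Real.exp (-u ^ 2 / 2) := by
  have hs : Real.sqrt (2 * Real.pi) ≠ 0 := by positivity
  have e1 : Real.exp (-(x - u) ^ 2 / 2) =
      Real.exp (-x ^ 2 / 2) * Real.exp (x * u) * Real.exp (-u ^ 2 / 2) := by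
    rw [← Real.exp_add, ← Real.exp_add]; congr 1; ring
  have e2 : Real.exp (-(x + u) ^ 2 / 2) =
      Real.exp (-x ^ 2 / 2) * Real.exp (-(x * u)) * Real.exp (-u ^ 2 / 2) := by
    rw [← Real.exp_add, ← Real.exp_add]; congr 1; ring
  unfold phi
  rw [e1, e2, Real.cosh_eq]
  have := (Real.exp_pos (-x ^ 2 / 2)).ne'
  field_simp

lemma B_integrand (x : ℝ) :
    Integrable (fun u => 2 * Real.cosh (x * u) * Real.exp (-u ^ 2 / 2) * cauchyDen u) := by
  have := (((conv_integrand x).add (conv_integrand' x)).div_const (phi x))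
  refine this.congr (ae_of_all _ fun u => ?_)
  simp only [← phi_cosh, Pi.add_apply]
  ring

lemma B_eq (x : ℝ) : 2 * (betaFn cauchyDen x + 1) =
    ∫ u, 2 * Real.cosh (x * u) * Real.exp (-u ^ 2 / 2) * cauchyDen u := by
  have h1 : 2 * (betaFn cauchyDen x + 1) = (conv cauchyDen x + conv cauchyDen x) / phi x := by
    unfold betaFn; ring
  rw [h1]
  nth_rewrite 2 [conv_sym]
  unfold conv
  rw [← integral_add (conv_integrand x) (conv_integrand' x), ← integral_div]
  congr 1; ext u
  rw [← phi_cosh]; ring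

lemma beta_strictMono : StrictMonoOn (betaFn cauchyDen) (Set.Ici 0) := by
  intro x hx y hy hxy
  simp only [Set.mem_Ici] at hx hy
  suffices 0 < 2 * (betaFn cauchyDen y + 1) - 2 * (betaFn cauchyDen x + 1) by linarith
  rw [B_eq, B_eq, ← integral_sub (B_integrand y) (B_integrand x)]
  rw [integral_pos_iff_support_of_nonneg]
  · have hsub : Set.Ioo (0:ℝ) 1 ⊆ Function.support (fun u =>
        2 * Real.cosh (y * u) * Real.exp (-u ^ 2 / 2) * cauchyDen u -
        2 * Real.cosh (x * u) * Real.exp (-u ^ 2 / 2) * cauchyDen u) := by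
      intro u hu
      have h1 : Real.cosh (x * u) < Real.cosh (y * u) := by
        rw [Real.cosh_lt_cosh, abs_of_nonneg (mul_nonneg hx hu.1.le),
          abs_of_nonneg (mul_nonneg hy hu.1.le)]
        exact mul_lt_mul_of_pos_right hxy hu.1
      have h2 := mul_pos (Real.exp_pos (-u ^ 2 / 2)) (cau_pos u)
      simp only [Function.mem_support]
      apply ne_of_gt
      nlinarith
    refine lt_of_lt_of_le ?_ (measure_mono hsub)
    simp
  · intro u
    have h1 : Real.cosh (x * u) ≤ Real.cosh (y * u) := by
      rw [Real.cosh_le_cosh, abs_mul, abs_mul, abs_of_nonneg hx, abs_of_nonneg hy]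
      exact mul_le_mul_of_nonneg_right hxy.le (abs_nonneg u)
    have h2 := mul_pos (Real.exp_pos (-u ^ 2 / 2)) (cau_pos u)
    simp only [Pi.zero_apply]
    nlinarith
  · exact (B_integrand y).sub (B_integrand x)

lemma Phibar_le_one (t : ℝ) : Phibar t ≤ 1 := by
  rw [← phi_integral]
  exact setIntegral_le_integral phi_integrable (ae_of_all _ fun x => (phi_pos x).le)

lemma Phibar_continuous : Continuous Phibar := by
  have h : ∀ t, Phibar t = Phibar 0 - ∫ u in (0:ℝ)..t, phi u := by
    intro t
    unfold Phibar
    rw [← intervalIntegral.integral_interval_add_Ioi (a := 0) (b := t)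
      phi_integrable.integrableOn phi_integrable.integrableOn]
    ring
  have : Phibar = fun t => Phibar 0 - ∫ u in (0:ℝ)..t, phi u := funext h
  rw [this]
  exact continuous_const.sub
    (intervalIntegral.continuous_primitive (fun a b => phi_integrable.intervalIntegrable) 0)

lemma Phibar_ge {t : ℝ} (ht : 0 ≤ t) : phi (t + 1) ≤ Phibar t := by
  unfold Phibar
  calc phi (t + 1) = ∫ u in Set.Ioc t (t + 1), phi (t + 1) := by simp
    _ ≤ ∫ u in Set.Ioc t (t + 1), phi u := by
      refine setIntegral_mono_on (integrable_const _) phi_integrable.integrableOn measurableSet_Ioc ?_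
      intro u hu
      exact phi_anti (ht.trans hu.1.le) hu.2
    _ ≤ _ := setIntegral_mono_set phi_integrable.integrableOn
      (ae_of_all _ fun x => (phi_pos x).le) Set.Ioc_subset_Ioi_self.eventuallyLE

lemma conv_ge {x : ℝ} (hx : 0 ≤ x) : phi 1 * cauchyDen (x + 1) ≤ conv cauchyDen x := by
  unfold conv
  calc phi 1 * cauchyDen (x + 1) = ∫ u in Set.Ioc x (x + 1), phi 1 * cauchyDen (x + 1) := by simp
    _ ≤ ∫ u in Set.Ioc x (x + 1), phi (x - u) * cauchyDen u := by
      refine setIntegral_mono_on (integrable_const _) (conv_integrand x).integrableOn measurableSet_Ioc ?_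
      intro u hu
      have h1 : phi 1 ≤ phi (x - u) := by
        rw [← phi_abs (x - u)]
        refine phi_anti (abs_nonneg _) ?_
        rw [abs_le]; constructor <;> linarith [hu.1, hu.2]
      exact mul_le_mul h1 (cau_anti (hx.trans hu.1.le) hu.2) (cau_pos _).le (phi_pos _).le
    _ ≤ _ := setIntegral_le_integral (conv_integrand x)
      (ae_of_all _ fun u => (mul_pos (phi_pos _) (cau_pos _)).le)

/-- The explicit lower bound for `β(z) Φ̄(z - ζ₁)`. -/
lemma betaPhi_ge {z1 z : ℝ} (h1 : 2 ≤ z1) (hz : z1 ≤ z) :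
    phi 1 * cauchyDen (z + 1) * Real.exp (z / 2) - 1 ≤ betaFn cauchyDen z * Phibar (z - z1) := by
  have hP := Phibar_ge (sub_nonneg.2 hz)
  have hP1 := Phibar_le_one (z - z1)
  have hg := conv_ge (x := z) (by linarith)
  have hr : phi z * Real.exp (z / 2) ≤ phi (z - z1 + 1) := by
    unfold phi
    rw [div_mul_eq_mul_div, ← Real.exp_add]
    gcongr
    nlinarith [mul_nonneg (sub_nonneg.2 hz) (sub_nonneg.2 h1)]
  have hc := cau_pos (z + 1)
  have hp1 := phi_pos 1
  have hpz := phi_pos z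
  have key : phi 1 * cauchyDen (z + 1) * Real.exp (z / 2) ≤
      conv cauchyDen z / phi z * Phibar (z - z1) := by
    rw [div_mul_eq_mul_div, le_div_iff₀ hpz]
    calc phi 1 * cauchyDen (z + 1) * Real.exp (z / 2) * phi z
        = (phi 1 * cauchyDen (z + 1)) * (phi z * Real.exp (z / 2)) := by ring
      _ ≤ conv cauchyDen z * Phibar (z - z1) :=
        mul_le_mul hg (hr.trans hP) (by positivity) (conv_nonneg z)
  unfold betaFn
  linarith

lemma exists_large (M : ℝ) : ∃ Z : ℝ, 2 ≤ Z ∧ ∀ z, Z ≤ z →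
    M ≤ phi 1 * cauchyDen (z + 1) * Real.exp (z / 2) - 1 := by
  have hc : 0 < phi 1 / (20 * Real.pi) := div_pos (phi_pos 1) (by positivity)
  have ht : Filter.Tendsto (fun z : ℝ => phi 1 / (20 * Real.pi) *
      (Real.exp (z / 2) / (z / 2) ^ 2)) Filter.atTop Filter.atTop :=
    ((Real.tendsto_exp_div_pow_atTop 2).comp
      (Filter.tendsto_id.atTop_div_const (by norm_num : (0:ℝ) < 2))).const_mul_atTop hc
  obtain ⟨Z, hZ⟩ := Filter.eventually_atTop.1 (ht.eventually_ge_atTop (M + 1))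
  refine ⟨max Z 2, le_max_right _ _, fun z hz => ?_⟩
  have h1 := hZ z ((le_max_left _ _).trans hz)
  have h2 : 2 ≤ z := (le_max_right _ _).trans hz
  have h3 : phi 1 / (20 * Real.pi) * (Real.exp (z / 2) / (z / 2) ^ 2) ≤
      phi 1 * cauchyDen (z + 1) * Real.exp (z / 2) := by
    have : (20 * Real.pi)⁻¹ * ((z / 2) ^ 2)⁻¹ ≤ cauchyDen (z + 1) := by
      unfold cauchyDen
      rw [← mul_inv]
      have := Real.pi_pos
      apply inv_anti₀ (by positivity)
      rw [mul_comm 20, mul_assoc]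
      gcongr
      nlinarith
    have hp := mul_pos (phi_pos 1) (Real.exp_pos (z / 2))
    calc _ = phi 1 * Real.exp (z / 2) * ((20 * Real.pi)⁻¹ * ((z / 2) ^ 2)⁻¹) := by
          simp only [div_eq_mul_inv]; ring
      _ ≤ phi 1 * Real.exp (z / 2) * cauchyDen (z + 1) := by gcongr
      _ = _ := by ring
  linarith

lemma beta_integrable :
    Integrable (betaFn cauchyDen) (ProbabilityTheory.gaussianReal 0 1) := by
  rw [ProbabilityTheory.gaussianReal_of_var_ne_zero _ one_ne_zero,
    integrable_withDensity_iff_integrable_smul' (ProbabilityTheory.measurable_gaussianPDF _ _)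
      (ae_of_all _ fun _ => ProbabilityTheory.gaussianPDF_lt_top)]
  refine (conv_integrable.sub phi_integrable).congr (ae_of_all _ fun x => ?_)
  simp only [ProbabilityTheory.toReal_gaussianPDF, phi_pdf, sub_zero, smul_eq_mul, betaFn,
    Pi.sub_apply]
  have := (phi_pos x).ne'
  field_simp

lemma beta_integral :
    ∫ x, betaFn cauchyDen x ∂(ProbabilityTheory.gaussianReal 0 1) = 0 := by
  rw [ProbabilityTheory.integral_gaussianReal_eq_integral_smul one_ne_zero]
  have : ∀ x, ProbabilityTheory.gaussianPDFReal 0 1 x • betaFn cauchyDen x =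
      conv cauchyDen x - phi x := by
    intro x
    simp only [phi_pdf, sub_zero, smul_eq_mul, betaFn]
    have := (phi_pos x).ne'
    field_simp
  simp_rw [this]
  rw [integral_sub conv_integrable phi_integrable, conv_integral, phi_integral, sub_self]

lemma den_ge {a : ℝ} (ha : 0 ≤ a) (x : ℝ) : 1 - a ≤ 1 + a * betaFn cauchyDen x := by
  nlinarith [beta_ge x]

lemma score_measurable (a : ℝ) :
    Measurable (fun x => betaFn cauchyDen x / (1 + a * betaFn cauchyDen x)) := by
  have := beta_continuous.measurable
  fun_prop

lemma score_integrable_zero {a : ℝ} (ha : 0 ≤ a) (ha1 : a < 1) :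
    Integrable (fun x => betaFn cauchyDen x / (1 + a * betaFn cauchyDen x))
      (ProbabilityTheory.gaussianReal 0 1) := by
  refine (beta_integrable.norm.div_const (1 - a)).mono'
    (score_measurable a).aestronglyMeasurable (ae_of_all _ fun x => ?_)
  have h := den_ge ha x
  rw [norm_div, Real.norm_of_nonneg (by linarith : 0 ≤ 1 + a * betaFn cauchyDen x)]
  gcongr

lemma score_ge {a : ℝ} (ha : 0 ≤ a) (ha1 : a ≤ 1 / 2) (x : ℝ) :
    -2 ≤ betaFn cauchyDen x / (1 + a * betaFn cauchyDen x) := by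
  have h := den_ge ha x
  have hb := beta_ge x
  rw [le_div_iff₀ (by linarith)]
  nlinarith

lemma score_le {a : ℝ} (ha : 0 < a) (ha1 : a ≤ 1 / 2) (x : ℝ) :
    betaFn cauchyDen x / (1 + a * betaFn cauchyDen x) ≤ 1 / a := by
  have h := den_ge ha.le x
  rw [div_le_div_iff₀ (by linarith) ha]
  nlinarith

lemma score_integrable {a : ℝ} (ha : 0 < a) (ha1 : a ≤ 1 / 2) (μ : ℝ) :
    Integrable (fun x => betaFn cauchyDen x / (1 + a * betaFn cauchyDen x))
      (ProbabilityTheory.gaussianReal μ 1) := by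
  refine Integrable.of_bound (score_measurable a).aestronglyMeasurable (2 + 1 / a)
    (ae_of_all _ fun x => ?_)
  have h1 := score_ge ha.le ha1 x
  have h2 := score_le ha ha1 x
  have h3 : 0 < 1 / a := by positivity
  rw [Real.norm_eq_abs, abs_le]
  constructor <;> linarith

lemma mtilde_le_two {a : ℝ} (ha : 0 < a) (ha1 : a ≤ 1 / 2) : mtilde cauchyDen a ≤ 2 := by
  have : ∫ _x : ℝ, (-2 : ℝ) ∂(ProbabilityTheory.gaussianReal 0 1) ≤ m1 cauchyDen 0 a :=
    integral_mono (integrable_const _) (score_integrable ha ha1 0) (score_ge ha.le ha1)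
  simp at this
  unfold mtilde
  linarith

lemma mtilde_continuousOn : ContinuousOn (mtilde cauchyDen) (Set.Icc 0 (1 / 2)) := by
  unfold mtilde m1
  refine ContinuousOn.neg ?_
  refine continuousOn_of_dominated (bound := fun x => ‖betaFn cauchyDen x‖ / (1 / 2)) ?_ ?_
    (beta_integrable.norm.div_const _) ?_
  · exact fun a _ => (score_measurable a).aestronglyMeasurable
  · intro a ha
    refine ae_of_all _ fun x => ?_
    have h := den_ge ha.1 x
    have h2 := ha.2
    rw [norm_div, Real.norm_of_nonneg (by linarith : 0 ≤ 1 + a * betaFn cauchyDen x)]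
    gcongr
    linarith
  · refine ae_of_all _ fun x => ?_
    refine ContinuousOn.div continuousOn_const (by fun_prop) fun a ha => ?_
    have h := den_ge ha.1 x
    have h2 := ha.2
    linarith

/-- `κ = E₀[β²/(1+|β|)]`. -/
def kappa : ℝ := ∫ x, betaFn cauchyDen x ^ 2 / (1 + |betaFn cauchyDen x|)
  ∂(ProbabilityTheory.gaussianReal 0 1)

lemma kappa_integrable :
    Integrable (fun x => betaFn cauchyDen x ^ 2 / (1 + |betaFn cauchyDen x|))
      (ProbabilityTheory.gaussianReal 0 1) := by
  have hm := beta_continuous.measurable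
  refine beta_integrable.norm.mono'
    ((hm.pow_const 2).div (measurable_const.add hm.abs)).aestronglyMeasurable (ae_of_all _ fun x => ?_)
  have h0 := abs_nonneg (betaFn cauchyDen x)
  rw [Real.norm_of_nonneg (by positivity), Real.norm_eq_abs, div_le_iff₀ (by positivity),
    ← sq_abs]
  nlinarith

lemma beta_large {Z : ℝ} (hZ2 : 2 ≤ Z)
    (hZ : ∀ z, Z ≤ z → 8 ≤ phi 1 * cauchyDen (z + 1) * Real.exp (z / 2) - 1)
    {z : ℝ} (hz : Z ≤ z) : 0 < betaFn cauchyDen z := by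
  have h1 := betaPhi_ge (z1 := 2) (z := z) le_rfl (hZ2.trans hz)
  have h2 := hZ z hz
  have h3 : 0 ≤ Phibar (z - 2) := setIntegral_nonneg measurableSet_Ioi fun u _ => (phi_pos u).le
  by_contra hcon
  push Not at hcon
  nlinarith [mul_nonneg (neg_nonneg.2 hcon) h3]

lemma kappa_pos : 0 < kappa := by
  obtain ⟨Z, hZ2, hZ⟩ := exists_large 8
  unfold kappa
  rw [integral_pos_iff_support_of_nonneg _ kappa_integrable]
  · have hsub : Set.Ioi Z ⊆ Function.support
        (fun x => betaFn cauchyDen x ^ 2 / (1 + |betaFn cauchyDen x|)) := by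
      intro x hx
      have hb := beta_large hZ2 hZ (le_of_lt hx)
      simp only [Function.mem_support]
      positivity
    refine lt_of_lt_of_le ?_ (measure_mono hsub)
    rw [pos_iff_ne_zero]
    intro h0
    have := ProbabilityTheory.gaussianReal_absolutelyContinuous' 0 (v := 1) one_ne_zero h0
    simp at this
  · intro x
    simp only [Pi.zero_apply]
    positivity

lemma mtilde_ge {a : ℝ} (ha : 0 < a) (ha1 : a < 1) : a * kappa ≤ mtilde cauchyDen a := by
  have h : ∫ x, (a * (betaFn cauchyDen x ^ 2 / (1 + |betaFn cauchyDen x|)) - betaFn cauchyDen x)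
        ∂(ProbabilityTheory.gaussianReal 0 1) ≤
      ∫ x, -(betaFn cauchyDen x / (1 + a * betaFn cauchyDen x))
        ∂(ProbabilityTheory.gaussianReal 0 1) := by
    refine integral_mono ((kappa_integrable.const_mul a).sub beta_integrable)
      (score_integrable_zero ha.le ha1).neg fun x => ?_
    have hd := den_ge ha.le x
    have hd0 : 0 < 1 + a * betaFn cauchyDen x := by linarith
    have e : -(betaFn cauchyDen x / (1 + a * betaFn cauchyDen x)) =
        a * (betaFn cauchyDen x ^ 2 / (1 + a * betaFn cauchyDen x)) - betaFn cauchyDen x := by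
      have hne := hd0.ne'
      rw [← neg_div, ← mul_div_assoc, eq_sub_iff_add_eq, div_add' _ _ _ hne]
      congr 1
      ring
    simp only
    rw [e]
    gcongr
    calc a * betaFn cauchyDen x ≤ a * |betaFn cauchyDen x| := by
          gcongr; exact le_abs_self _
      _ ≤ |betaFn cauchyDen x| := mul_le_of_le_one_left (abs_nonneg _) ha1.le
  rw [integral_sub (kappa_integrable.const_mul a) beta_integrable, beta_integral,
    integral_const_mul, integral_neg, sub_zero] at h
  exact h

lemma gauss_tail (μ z : ℝ) :
    (ProbabilityTheory.gaussianReal μ 1).real (Set.Ioi z) = Phibar (z - μ) := by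
  rw [← integral_indicator_one measurableSet_Ioi,
    ProbabilityTheory.integral_gaussianReal_eq_integral_smul one_ne_zero]
  unfold Phibar
  rw [← integral_indicator measurableSet_Ioi, ← integral_sub_right_eq_self
    (fun x => (Set.Ioi (z - μ)).indicator (fun u => phi u) x) μ]
  congr 1; ext x
  simp only [phi_pdf, Set.indicator_apply, Set.mem_Ioi, sub_lt_sub_iff_right, Pi.one_apply,
    smul_eq_mul, mul_ite, mul_one, mul_zero]

/-- Crude lower bound for the first moment. -/
lemma m1_ge {a z : ℝ} (μ : ℝ) (ha : 0 < a) (ha1 : a ≤ 1 / 2) (hz : 0 ≤ z)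
    (hb : betaFn cauchyDen z = 1 / a) :
    (1 / 2) * (betaFn cauchyDen z * Phibar (z - μ)) - 2 ≤ m1 cauchyDen μ a := by
  have hind : Integrable ((Set.Ioi z).indicator (fun _ : ℝ => (1 / 2) * (1 / a)))
      (ProbabilityTheory.gaussianReal μ 1) :=
    (integrable_const _).indicator measurableSet_Ioi
  have h : ∫ x, ((Set.Ioi z).indicator (fun _ : ℝ => (1 / 2) * (1 / a)) x - 2)
      ∂(ProbabilityTheory.gaussianReal μ 1) ≤ m1 cauchyDen μ a := by
    refine integral_mono (hind.sub (integrable_const _)) (score_integrable ha ha1 μ) fun x => ?_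
    simp only [Set.indicator_apply, Set.mem_Ioi]
    split_ifs with hx
    · have hlt : betaFn cauchyDen z < betaFn cauchyDen x :=
        beta_strictMono hz (Set.mem_Ici.2 (hz.trans hx.le)) hx
      have hpos : 0 < 1 / a := by positivity
      rw [hb] at hlt
      have hd : 0 < 1 + a * betaFn cauchyDen x := by nlinarith
      have : (1 / 2) * (1 / a) ≤ betaFn cauchyDen x / (1 + a * betaFn cauchyDen x) := by
        rw [le_div_iff₀ hd]
        have e : 1 / 2 * (1 / a) * (1 + a * betaFn cauchyDen x) =
          (1 / 2) * (1 / a) + (1 / 2) * betaFn cauchyDen x := by field_simp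
        rw [e]; linarith
      linarith
    · have := score_ge ha.le ha1 x
      linarith
  rw [integral_sub hind (integrable_const _), integral_indicator_const _ measurableSet_Ioi,
    gauss_tail] at h
  simp only [integral_const, smul_eq_mul, probReal_univ, one_mul] at h
  rw [hb]
  linarith

/-- Lemma 7: lower bound on `m₁` at the oversmoothing
threshold.  With `ζ` the pseudo-threshold (`β(ζ(a)) = 1/a`), `α₁` defined by
`d α₁ m̃(α₁) = s_n/n` for small enough `d`, `ζ₁ = ζ(α₁)` and
`π₁ = n⁻¹ #{i : |θ₀ᵢ| ≥ ζ₁} > 0`, the equation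
`Φ̄(ζ(α) - ζ₁) = 8 π₁⁻¹ α m̃(α)` has a solution `α ∈ (0, α₁]`, and its
largest solution `α₃` satisfies
`m₁(ζ₁, α₃) ≥ (1/4) β(ζ₃) Φ̄(ζ₃ - ζ₁)` with `ζ₃ = ζ(α₃)`, provided the
constant `c₀` in `s_n ≤ c₀ n` is small enough. -/
theorem m1_lower_bound_oversmoothing :
    ∃ d > (0 : ℝ), ∃ c0 > (0 : ℝ), ∃ N0 : ℕ,
      ∀ n : ℕ, N0 ≤ n → ∀ s : ℕ, 1 ≤ s → (s : ℝ) ≤ c0 * n →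
      ∀ ζf : ℝ → ℝ,
        (∀ a ∈ Set.Ioc (0 : ℝ) 1, 0 < ζf a ∧ betaFn cauchyDen (ζf a) = 1 / a) →
      ∀ α1 : ℝ, α1 ∈ Set.Ioo (0 : ℝ) 1 →
        d * α1 * mtilde cauchyDen α1 = (s : ℝ) / n →
      ∀ θ0 ∈ ell0 n s, ∀ π1 : ℝ,
        π1 = (Nat.card {i : Fin n // ζf α1 ≤ |θ0 i|} : ℝ) / n → 0 < π1 →
        (∃ α ∈ Set.Ioc (0 : ℝ) α1,
          Phibar (ζf α - ζf α1) = 8 * π1⁻¹ * α * mtilde cauchyDen α) ∧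
        ∀ α3 ∈ Set.Ioc (0 : ℝ) α1,
          Phibar (ζf α3 - ζf α1) = 8 * π1⁻¹ * α3 * mtilde cauchyDen α3 →
          (∀ α ∈ Set.Ioc (0 : ℝ) α1,
            Phibar (ζf α - ζf α1) = 8 * π1⁻¹ * α * mtilde cauchyDen α → α ≤ α3) →
          (1 / 4) * betaFn cauchyDen (ζf α3) * Phibar (ζf α3 - ζf α1) ≤
            m1 cauchyDen (ζf α1) α3 := by
  obtain ⟨Z, hZ2, hZ⟩ := exists_large 8
  set a0 : ℝ := 1 / (|betaFn cauchyDen Z| + 2) with ha0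
  have hbZ := abs_nonneg (betaFn cauchyDen Z)
  have ha0pos : 0 < a0 := by positivity
  have ha0half : a0 ≤ 1 / 2 := by
    rw [ha0]
    exact one_div_le_one_div_of_le (by norm_num) (by linarith)
  refine ⟨1, one_pos, kappa * a0 ^ 2, mul_pos kappa_pos (by positivity), 1, ?_⟩
  intro n hn s _ hsn ζf hζ α1 hα1 heq θ0 hθ π1 hπ hπpos
  have hnpos : (0 : ℝ) < n := by exact_mod_cast hn
  have hsn' : (s : ℝ) / n ≤ kappa * a0 ^ 2 := by rwa [div_le_iff₀ hnpos]
  have hα1pos := hα1.1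
  have hmt := mtilde_ge hα1.1 hα1.2
  have hα1le : α1 ≤ a0 := by
    have h1 : kappa * α1 ^ 2 ≤ kappa * a0 ^ 2 := by
      calc kappa * α1 ^ 2 = α1 * (α1 * kappa) := by ring
        _ ≤ α1 * mtilde cauchyDen α1 := by gcongr
        _ ≤ _ := by linarith
    have h2 := le_of_mul_le_mul_left h1 kappa_pos
    exact (sq_le_sq₀ hα1pos.le ha0pos.le).1 h2
  have hα1half : α1 ≤ 1 / 2 := hα1le.trans ha0half
  have hmem : ∀ a ∈ Set.Ioc (0 : ℝ) α1, a ∈ Set.Ioc (0 : ℝ) 1 := fun a ha =>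
    ⟨ha.1, ha.2.trans hα1.2.le⟩
  have h1mem : α1 ∈ Set.Ioc (0 : ℝ) α1 := ⟨hα1pos, le_rfl⟩
  obtain ⟨hζ1pos, hζ1⟩ := hζ α1 (hmem _ h1mem)
  have hZζ : Z < ζf α1 := by
    rw [← beta_strictMono.lt_iff_lt (Set.mem_Ici.2 (by linarith)) (Set.mem_Ici.2 hζ1pos.le), hζ1]
    have h1 : |betaFn cauchyDen Z| + 2 ≤ 1 / α1 := by
      rw [le_div_iff₀ hα1pos]
      calc (|betaFn cauchyDen Z| + 2) * α1 ≤ (|betaFn cauchyDen Z| + 2) * a0 := by gcongr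
        _ = 1 := by rw [ha0]; field_simp
    linarith [le_abs_self (betaFn cauchyDen Z)]
  constructor
  · -- existence of a solution
    have hπle : π1 ≤ (s : ℝ) / n := by
      rw [hπ]
      gcongr
      refine le_trans ?_ (show Nat.card {i : Fin n // θ0 i ≠ 0} ≤ s from hθ)
      refine Nat.card_le_card_of_injective
        (fun i : {i : Fin n // ζf α1 ≤ |θ0 i|} => (⟨i.1, ?_⟩ : {i : Fin n // θ0 i ≠ 0})) ?_
      · intro h0
        have := i.2
        rw [h0, abs_zero] at this
        linarith
      · intro i j hij
        simpa [Subtype.ext_iff] using hij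
    obtain ⟨Y, _, hY⟩ := exists_large (16 * π1⁻¹)
    set y := max Y (ζf α1) with hy
    have hζy : ζf α1 ≤ y := le_max_right _ _
    have hbpos : ∀ z ∈ Set.Icc (ζf α1) y, 0 < betaFn cauchyDen z := fun z hz =>
      beta_large hZ2 hZ (hZζ.le.trans hz.1)
    have hbα : ∀ z ∈ Set.Icc (ζf α1) y, 1 / betaFn cauchyDen z ∈ Set.Ioc 0 α1 := by
      intro z hz
      refine ⟨one_div_pos.2 (hbpos z hz), ?_⟩
      rw [one_div_le (hbpos z hz) hα1pos, ← hζ1]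
      exact beta_strictMono.monotoneOn (Set.mem_Ici.2 hζ1pos.le)
        (Set.mem_Ici.2 (hζ1pos.le.trans hz.1)) hz.1
    let h : ℝ → ℝ := fun z => Phibar (z - ζf α1) -
      8 * π1⁻¹ * (1 / betaFn cauchyDen z) * mtilde cauchyDen (1 / betaFn cauchyDen z)
    have hcont : ContinuousOn h (Set.Icc (ζf α1) y) := by
      have hc1 : ContinuousOn (fun z => 1 / betaFn cauchyDen z) (Set.Icc (ζf α1) y) :=
        continuousOn_const.div beta_continuous.continuousOn fun z hz => (hbpos z hz).ne'
      refine ContinuousOn.sub ?_ ?_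
      · exact (Phibar_continuous.comp (by fun_prop)).continuousOn
      · refine (continuousOn_const.mul hc1).mul (mtilde_continuousOn.comp hc1 fun z hz => ?_)
        exact ⟨(hbα z hz).1.le, (hbα z hz).2.trans hα1half⟩
    have hleft : h (ζf α1) ≤ 0 := by
      simp only [h, hζ1, one_div_one_div]
      have h1 := Phibar_le_one (ζf α1 - ζf α1)
      have h2 : π1 ≤ α1 * mtilde cauchyDen α1 := by linarith
      have h3 : 1 ≤ π1⁻¹ * (α1 * mtilde cauchyDen α1) := by
        rw [inv_mul_eq_div, le_div_iff₀ hπpos]; linarith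
      have e : 8 * π1⁻¹ * α1 * mtilde cauchyDen α1 = 8 * (π1⁻¹ * (α1 * mtilde cauchyDen α1)) := by
        ring
      rw [e]; linarith
    have hymem : y ∈ Set.Icc (ζf α1) y := ⟨hζy, le_rfl⟩
    have hright : 0 ≤ h y := by
      simp only [h]
      have h1 := (hY y (le_max_left _ _)).trans (betaPhi_ge (hZ2.trans hZζ.le) hζy)
      have hb := hbpos y hymem
      have hα := hbα y hymem
      have h2 := mtilde_le_two hα.1 (hα.2.trans hα1half)
      have h3 : 8 * π1⁻¹ * mtilde cauchyDen (1 / betaFn cauchyDen y) ≤ 8 * π1⁻¹ * 2 := by gcongr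
      have h4 : 8 * π1⁻¹ * mtilde cauchyDen (1 / betaFn cauchyDen y) ≤
        betaFn cauchyDen y * Phibar (y - ζf α1) := by linarith
      have h5 := mul_le_mul_of_nonneg_left h4 hα.1.le
      have e : 1 / betaFn cauchyDen y * (betaFn cauchyDen y * Phibar (y - ζf α1)) =
        Phibar (y - ζf α1) := by field_simp
      rw [e] at h5
      linarith
    obtain ⟨z, hz, hz0⟩ := intermediate_value_Icc hζy hcont ⟨hleft, hright⟩
    refine ⟨1 / betaFn cauchyDen z, hbα z hz, ?_⟩
    obtain ⟨hp, hq⟩ := hζ _ (hmem _ (hbα z hz))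
    rw [one_div_one_div] at hq
    have hzz : ζf (1 / betaFn cauchyDen z) = z :=
      beta_strictMono.injOn (Set.mem_Ici.2 hp.le) (Set.mem_Ici.2 (hζ1pos.le.trans hz.1)) hq
    rw [hzz]
    simp only [h] at hz0
    linarith
  · intro α3 hα3 _ _
    obtain ⟨hp, hq⟩ := hζ _ (hmem _ hα3)
    have hζ13 : ζf α1 ≤ ζf α3 := by
      rw [← beta_strictMono.le_iff_le (Set.mem_Ici.2 hζ1pos.le) (Set.mem_Ici.2 hp.le), hζ1, hq]
      exact one_div_le_one_div_of_le hα3.1 hα3.2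
    have h1 := m1_ge (ζf α1) hα3.1 (hα3.2.trans hα1half) hp.le hq
    have h2 := (hZ _ (hZζ.le.trans hζ13)).trans (betaPhi_ge (hZ2.trans hZζ.le) hζ13)
    linarith

end
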